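/- arXiv:2309.12621 — 11 statements merged into one kernel-verified Lean document; each statement's English description precedes it below -/
import Mathlib

section
/- Let R be a ring and let M ≤ F be right R-modules. The following conditions are equivalent: (a) M is dense in F and F is a maximal dense extension of M, i.e. whenever F ≤ F' with M dense in F', one has F = F'; (b) F is rationally complete and M is dense in F; (c) F is rationally complete, M is essential in F, and F is minimal with this property, i.e. every rationally complete module F' with M ≤ F' ≤ F equals F. Moreover, a module F satisfying any of these equivalent conditions is (isomorphic over M to) the rational hull Ẽ(M) of M. -/
/- Right `R`-modules are rendered as left `R`-modules (i.e. we work over the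
opposite ring), so "`x·r`" becomes "`r • x`". -/

universe u

/-- `N` is a dense submodule of `M`. -/
def IsDenseSub (R : Type*) [Ring R] {M : Type*} [AddCommGroup M] [Module R M]
    (N : Submodule R M) : Prop :=
  ∀ (x y : M), y ≠ 0 → ∃ r : R, r • x ∈ N ∧ r • y ≠ 0

/-- `M` is rationally complete: it has no proper dense extension. -/
def RationallyComplete (R : Type u) [Ring R] (M : Type u) [AddCommGroup M] [Module R M] : Prop :=
  ∀ (V : Type u) [AddCommGroup V] [Module R V] (f : M →ₗ[R] V),
    Function.Injective f → IsDenseSub R (LinearMap.range f) → Function.Surjective f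

/-- The rational hull of `M` computed inside `E`. -/
def ratHull (R : Type*) [Ring R] (E : Type*) [AddCommGroup E] [Module R E]
    (M : Submodule R E) : Submodule R E where
  carrier := {x | ∀ ϑ : E →ₗ[R] E, (∀ m ∈ M, ϑ m = 0) → ϑ x = 0}
  add_mem' := by
    intro a b ha hb ϑ h
    simp only [Set.mem_setOf_eq] at *
    rw [map_add, ha ϑ h, hb ϑ h, add_zero]
  zero_mem' := by
    intro ϑ _
    exact map_zero ϑ
  smul_mem' := by
    intro r x hx ϑ h
    simp only [Set.mem_setOf_eq] at *
    rw [map_smul, hx ϑ h, smul_zero]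


theorem aux_trans {R : Type*} [Ring R] {F V : Type*} [AddCommGroup F] [Module R F]
    [AddCommGroup V] [Module R V] (M : Submodule R F) (hM : IsDenseSub R M) (f : F →ₗ[R] V)
    (hf : Function.Injective f) (hd : IsDenseSub R (LinearMap.range f)) :
    IsDenseSub R (Submodule.map f M) := by
  intro x y hy
  obtain ⟨r, ⟨a, ha⟩, hr⟩ := hd x y hy
  obtain ⟨s, ⟨b, hb⟩, hs⟩ := hd (r • y) (r • y) hr
  have hb0 : b ≠ 0 := by
    rintro rfl
    exact hs (by rw [← hb, map_zero])
  obtain ⟨t, ht, htb⟩ := hM (s • a) b hb0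
  refine ⟨t * s * r, ⟨t • s • a, ht, ?_⟩, ?_⟩
  · rw [map_smul, map_smul, ha, smul_smul, smul_smul]
  · intro h
    apply htb
    apply hf
    rw [map_smul, hb, map_zero, smul_smul, smul_smul]
    simpa [mul_assoc] using h

theorem aux_dense {R : Type u} [Ring R] {E : Type u} [AddCommGroup E] [Module R E]
    (hE : Module.Injective R E) (M : Submodule R E) (x y : E) (hx : x ∈ ratHull R E M)
    (hy : y ≠ 0) : ∃ r : R, r • x ∈ M ∧ r • y ≠ 0 := by
  by_contra hcon
  push Not at hcon
  let p : R →ₗ[R] (E ⧸ M) := LinearMap.toSpanSingleton R (E ⧸ M) (M.mkQ x)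
  have hle : LinearMap.ker p ≤ LinearMap.ker (LinearMap.toSpanSingleton R E y) := by
    intro r hr
    rw [LinearMap.mem_ker, LinearMap.toSpanSingleton_apply] at hr ⊢
    rw [← map_smul, Submodule.mkQ_apply, Submodule.Quotient.mk_eq_zero] at hr
    exact hcon r hr
  obtain ⟨h, hh⟩ := hE.out ((LinearMap.ker p).liftQ p le_rfl)
    (LinearMap.ker_eq_bot.mp (Submodule.ker_liftQ_eq_bot _ _ _ le_rfl))
    ((LinearMap.ker p).liftQ (LinearMap.toSpanSingleton R E y) hle)
  have h1 := hh (Submodule.Quotient.mk 1)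
  simp only [Submodule.liftQ_apply, p, LinearMap.toSpanSingleton_apply, one_smul] at h1
  apply hy
  rw [← h1]
  exact hx (h ∘ₗ M.mkQ) (fun m hm => by
    rw [LinearMap.comp_apply, Submodule.mkQ_apply, (Submodule.Quotient.mk_eq_zero M).mpr hm,
      map_zero])

theorem aux_map {R : Type u} [Ring R] {M V E : Type u} [AddCommGroup M] [Module R M]
    [AddCommGroup V] [Module R V] [AddCommGroup E] [Module R E]
    (hE : Module.Injective R E) (e : M →ₗ[R] E) (he : Function.Injective e)
    (hEess : ∀ N : Submodule R E, N ⊓ LinearMap.range e = ⊥ → N = ⊥)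
    (f : M →ₗ[R] V) (hf : Function.Injective f) (hd : IsDenseSub R (LinearMap.range f)) :
    ∃ g : V →ₗ[R] E, (∀ m, g (f m) = e m) ∧ Function.Injective g ∧
      ∀ v, g v ∈ ratHull R E (LinearMap.range e) := by
  obtain ⟨g, hg⟩ := hE.out f hf e
  refine ⟨g, hg, ?_, ?_⟩
  · rw [injective_iff_map_eq_zero]
    intro y hy
    by_contra hy0
    obtain ⟨r, ⟨m, hm⟩, hr⟩ := hd y y hy0
    apply hr
    rw [← hm]
    have : m = 0 := he (by rw [← hg, hm, map_smul, hy, smul_zero, map_zero])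
    rw [this, map_zero]
  · intro x θ hθ
    by_contra hy
    have h1 : ¬ (Submodule.span R {θ (g x)} ⊓ LinearMap.range e = ⊥) := fun h => by
      have := hEess _ h
      rw [Submodule.span_singleton_eq_bot] at this
      exact hy this
    obtain ⟨z, ⟨hz1, ⟨m, hm⟩⟩, hz0⟩ := Submodule.exists_mem_ne_zero_of_ne_bot h1
    obtain ⟨s, hs⟩ := Submodule.mem_span_singleton.mp hz1
    have hfm : f m ≠ 0 := by
      intro h
      have : m = 0 := hf (by rw [h, map_zero])
      apply hz0
      rw [← hm, this, map_zero]
    obtain ⟨r, ⟨a, ha⟩, hr⟩ := hd (s • x) (f m) hfm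
    apply hr
    have h2 : e (r • m) = 0 := by
      rw [map_smul, hm, ← hs, ← map_smul, ← map_smul, ← map_smul, ← map_smul, ← ha, hg]
      exact hθ _ ⟨a, rfl⟩
    have h3 : r • m = 0 := he (by rw [h2, map_zero])
    rw [← map_smul, h3, map_zero]

theorem aux_le {R : Type*} [Ring R] {E : Type*} [AddCommGroup E] [Module R E]
    (M : Submodule R E) : M ≤ ratHull R E M := fun m hm _ h => h m hm

theorem aux_complete {R : Type u} [Ring R] {E : Type u} [AddCommGroup E] [Module R E]
    (hE : Module.Injective R E) (M : Submodule R E)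
    (hEess : ∀ N : Submodule R E, N ⊓ M = ⊥ → N = ⊥) :
    RationallyComplete R (ratHull R E M) := by
  intro V _ _ f hf hd
  obtain ⟨g, hg, hgi, hgm⟩ := aux_map hE (ratHull R E M).subtype Subtype.val_injective
    (fun N hN => hEess N (by
      rw [Submodule.range_subtype] at hN
      exact le_bot_iff.mp (hN ▸ inf_le_inf_left N (aux_le M)))) f hf hd
  intro v
  have hv : g v ∈ ratHull R E M := by
    intro θ hθ
    refine hgm v θ ?_
    rintro _ ⟨m, rfl⟩
    exact m.2 θ hθ
  exact ⟨⟨g v, hv⟩, hgi (by rw [hg]; rfl)⟩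

theorem aux_equiv {R : Type u} [Ring R] {A B : Type u} [AddCommGroup A] [Module R A]
    [AddCommGroup B] [Module R B] (i : A ≃ₗ[R] B) (hA : RationallyComplete R A) :
    RationallyComplete R B := by
  intro V _ _ f hf hd v
  obtain ⟨a, ha⟩ := hA V (f ∘ₗ i.toLinearMap) (hf.comp i.injective) (by
    rw [LinearMap.range_comp, LinearEquiv.range, Submodule.map_top]; exact hd) v
  exact ⟨i a, ha⟩

theorem aux_hull {R : Type u} [Ring R] {F E : Type u} [AddCommGroup F] [Module R F]
    [AddCommGroup E] [Module R E] (hE : Module.Injective R E) (N : Submodule R E)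
    (hF : RationallyComplete R F) (φ : F →ₗ[R] E) (hφ : Function.Injective φ)
    (hN : N ≤ LinearMap.range φ) (hm : ∀ v, φ v ∈ ratHull R E N) :
    Function.Surjective (φ.codRestrict (ratHull R E N) hm) := by
  apply hF
  · intro a b h
    exact hφ (congrArg Subtype.val h)
  · intro x y hy
    obtain ⟨r, hr, hry⟩ := aux_dense hE N x y x.2 (fun h => hy (Subtype.ext h))
    obtain ⟨a, ha⟩ := hN hr
    exact ⟨r, ⟨a, Subtype.ext ha⟩, fun h => hry (congrArg Subtype.val h)⟩

theorem aux_mono {R : Type*} [Ring R] {F : Type*} [AddCommGroup F] [Module R F]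
    {M N : Submodule R F} (h : M ≤ N) (hM : IsDenseSub R M) : IsDenseSub R N := fun x y hy => by
  obtain ⟨r, h1, h2⟩ := hM x y hy
  exact ⟨r, h h1, h2⟩

/-- For modules `M ≤ F`, the following are equivalent:
(a) `M` is dense in `F` and `F` is a maximal dense extension of `M`;
(b) `F` is rationally complete and `M` is dense in `F`;
(c) `F` is rationally complete, `M` is essential in `F`, and `F` is minimal such.
Moreover, such an `F` is isomorphic over `M` to the rational hull `Ẽ(M)` of `M`
(computed inside any injective hull `E` of `M`). -/
theorem stmt0 (R : Type u) [Ring R] (F : Type u) [AddCommGroup F] [Module R F]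
    (M : Submodule R F)
    -- an injective hull `E` of `M`
    (E : Type u) [AddCommGroup E] [Module R E] (e : ↥M →ₗ[R] E)
    (he : Function.Injective e) (hE : Module.Injective R E)
    (hEess : ∀ N : Submodule R E, N ⊓ LinearMap.range e = ⊥ → N = ⊥) :
    -- (a) ↔ (b)
    ((IsDenseSub R M ∧
        ∀ (F' : Type u) [AddCommGroup F'] [Module R F'] (j : F →ₗ[R] F'),
          Function.Injective j → IsDenseSub R (Submodule.map j M) → Function.Surjective j) ↔
      (RationallyComplete R F ∧ IsDenseSub R M)) ∧
    -- (b) ↔ (c)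
    ((RationallyComplete R F ∧ IsDenseSub R M) ↔
      (RationallyComplete R F ∧
        (∀ N : Submodule R F, N ⊓ M = ⊥ → N = ⊥) ∧
        ∀ F' : Submodule R F, M ≤ F' → RationallyComplete R ↥F' → F' = ⊤)) ∧
    -- moreover: any such `F` is isomorphic over `M` to the rational hull of `M`
    ((RationallyComplete R F ∧ IsDenseSub R M) →
      ∃ g : F ≃ₗ[R] ↥(ratHull R E (LinearMap.range e)),
        ∀ m : ↥M, ((g (m : F)) : E) = e m) := by
  refine ⟨⟨?_, ?_⟩, ⟨?_, ?_⟩, ?_⟩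
  · rintro ⟨hM, hmax⟩
    exact ⟨fun V _ _ f hf hd => hmax V f hf (aux_trans M hM f hf hd), hM⟩
  · rintro ⟨hF, hM⟩
    refine ⟨hM, fun V _ _ j hj hd => hF V j hj (aux_mono ?_ hd)⟩
    exact LinearMap.map_le_range
  · rintro ⟨hF, hM⟩
    refine ⟨hF, ?_, ?_⟩
    · intro N hN
      rw [eq_bot_iff]
      intro y hy
      by_contra hy0
      obtain ⟨r, h1, h2⟩ := hM y y hy0
      have : r • y ∈ N ⊓ M := ⟨N.smul_mem r hy, h1⟩
      rw [hN] at this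
      exact h2 this
    · intro F' hle hF'
      have := hF' F F'.subtype Subtype.val_injective
        (by rw [Submodule.range_subtype]; exact aux_mono hle hM)
      rw [← LinearMap.range_eq_top, Submodule.range_subtype] at this
      exact this
  · rintro ⟨hF, hess, hmin⟩
    refine ⟨hF, ?_⟩
    obtain ⟨φ, hφ⟩ := hE.out M.subtype Subtype.val_injective e
    have hφi : Function.Injective φ := by
      rw [← LinearMap.ker_eq_bot]
      apply hess
      rw [eq_bot_iff]
      rintro y ⟨hy1, hy2⟩
      have h1 : e ⟨y, hy2⟩ = 0 := by
        rw [← hφ]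
        exact hy1
      have h2 : (⟨y, hy2⟩ : M) = 0 := he (by rw [h1, map_zero])
      exact congrArg Subtype.val h2
    have hs := aux_hull hE (LinearMap.range φ) hF φ hφi le_rfl
      (fun v => aux_le _ ⟨v, rfl⟩)
    have hr : LinearMap.range e ≤ LinearMap.range φ := by
      rintro _ ⟨m, rfl⟩
      exact ⟨m, hφ m⟩
    have hH : ratHull R E (LinearMap.range e) ≤ LinearMap.range φ := by
      intro x hx
      obtain ⟨a, ha⟩ := hs ⟨x, fun θ hθ => hx θ (fun m hm => hθ m (hr hm))⟩
      exact ⟨a, congrArg Subtype.val ha⟩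
    let F' := Submodule.comap φ (ratHull R E (LinearMap.range e))
    let i : F' →ₗ[R] ratHull R E (LinearMap.range e) :=
      (φ ∘ₗ F'.subtype).codRestrict _ (fun x => x.2)
    have hi : Function.Bijective i := by
      constructor
      · intro a b h
        exact Subtype.ext (hφi (congrArg Subtype.val h))
      · rintro ⟨x, hx⟩
        obtain ⟨a, rfl⟩ := hH hx
        exact ⟨⟨a, hx⟩, rfl⟩
    have hT : F' = ⊤ := hmin F'
      (fun m hm => by
        have h1 : φ m = e ⟨m, hm⟩ := hφ ⟨m, hm⟩
        change φ m ∈ ratHull R E (LinearMap.range e)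
        rw [h1]
        exact aux_le _ ⟨_, rfl⟩)
      (aux_equiv (LinearEquiv.ofBijective i hi).symm (aux_complete hE _ hEess))
    intro x y hy
    have hx : x ∈ F' := hT ▸ Submodule.mem_top
    obtain ⟨r, ⟨m, hm⟩, h2⟩ := aux_dense hE (LinearMap.range e) (φ x) (φ y) hx
      (fun h => hy (hφi (by rw [h, map_zero])))
    refine ⟨r, ?_, fun h => h2 (by rw [← map_smul, h, map_zero])⟩
    have h3 : (m : F) = r • x := hφi (by rw [map_smul, ← hm]; exact hφ m)
    rw [← h3]
    exact m.2
  · rintro ⟨hF, hM⟩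
    obtain ⟨g, hg, hgi, hgm⟩ := aux_map hE e he hEess M.subtype Subtype.val_injective
      (by rw [Submodule.range_subtype]; exact hM)
    have hs := aux_hull hE (LinearMap.range e) hF g hgi
      (by rintro _ ⟨m, rfl⟩; exact ⟨m, hg m⟩) hgm
    exact ⟨LinearEquiv.ofBijective _ ⟨fun a b h => hgi (congrArg Subtype.val h), hs⟩,
      fun m => hg m⟩
end

section
/- Let M be a right R-module with injective hull E(M). Then Ẽ(M) = {x ∈ E(M) : l_{E(M)}(x⁻¹M) = 0} = {x ∈ E(M) : Hom_R(R/x⁻¹M, E(M)) = 0}, where x⁻¹M = {r ∈ R : xr ∈ M} and l_{E(M)}(I) = {y ∈ E(M) : yI = 0}. -/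
/-- If `E` is an injective hull of `M`, then
`Ẽ(M) = {x ∈ E : l_E(x⁻¹M) = 0} = {x ∈ E : Hom_R(R/x⁻¹M, E) = 0}`,
where `x⁻¹M = {r : r • x ∈ M}`. -/
theorem stmt5 (R : Type*) [Ring R] (E : Type*) [AddCommGroup E] [Module R E]
    (M : Submodule R E) (hE : Module.Injective R E)
    (hess : ∀ N : Submodule R E, N ⊓ M = ⊥ → N = ⊥) :
    (ratHull R E M : Set E) =
      {x : E | ∀ y : E, (∀ r : R, r • x ∈ M → r • y = 0) → y = 0} ∧
    (ratHull R E M : Set E) =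
      {x : E |
        ∀ f : (R ⧸ Submodule.comap (LinearMap.toSpanSingleton R E x) M) →ₗ[R] E, f = 0} := by
  have key : (ratHull R E M : Set E) =
      {x : E | ∀ y : E, (∀ r : R, r • x ∈ M → r • y = 0) → y = 0} := by
    ext x
    constructor
    · intro hx y hy
      let f : R →ₗ[R] (E ⧸ M) := LinearMap.toSpanSingleton R (E ⧸ M) (M.mkQ x)
      let g : R →ₗ[R] E := LinearMap.toSpanSingleton R E y
      have hfg : LinearMap.ker f ≤ LinearMap.ker g := by
        intro r hr
        have h1 : r • M.mkQ x = 0 := hr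
        rw [← map_smul, Submodule.mkQ_apply, Submodule.Quotient.mk_eq_zero] at h1
        exact hy r h1
      let k : LinearMap.range f →ₗ[R] E :=
        ((LinearMap.ker f).liftQ g hfg).comp f.quotKerEquivRange.symm.toLinearMap
      obtain ⟨h, hh⟩ := hE.out (LinearMap.range f).subtype Subtype.val_injective k
      have h2 : (h.comp M.mkQ) x = 0 := by
        apply hx
        intro m hm
        have : M.mkQ m = 0 := by simpa using hm
        rw [LinearMap.comp_apply, this, map_zero]
      have h4 : f 1 = M.mkQ x := one_smul R _
      have h5 : f.quotKerEquivRange.symm ⟨f 1, LinearMap.mem_range_self f 1⟩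
          = (LinearMap.ker f).mkQ 1 := by
        rw [LinearEquiv.symm_apply_eq]
        apply Subtype.ext
        simp
      have h3 := hh ⟨f 1, LinearMap.mem_range_self f 1⟩
      have h6 : k ⟨f 1, LinearMap.mem_range_self f 1⟩ = y := by
        change (LinearMap.ker f).liftQ g hfg (f.quotKerEquivRange.symm _) = y
        rw [h5]
        exact one_smul R y
      rw [h6] at h3
      rw [← h3, ← h2]
      change h (f 1) = h (M.mkQ x)
      rw [h4]
    · intro hx ϑ hϑ
      apply hx
      intro r hr
      rw [← map_smul]
      exact hϑ _ hr
  refine ⟨key, key.trans ?_⟩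
  ext x
  constructor
  · intro hx f
    have h1 : f (Submodule.Quotient.mk 1) = 0 := by
      apply hx
      intro r hr
      rw [← map_smul, ← Submodule.Quotient.mk_smul, smul_eq_mul, mul_one,
        (Submodule.Quotient.mk_eq_zero _).2 (show r ∈ _ from hr), map_zero]
    apply Submodule.linearMap_qext
    apply LinearMap.ext_ring
    exact h1
  · intro hx y hy
    have h := hx (Submodule.liftQ _ (LinearMap.toSpanSingleton R E y) (fun r hr => hy r hr))
    have h1 := LinearMap.congr_fun h (Submodule.Quotient.mk 1)
    have h2 : (1 : R) • y = 0 := h1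
    rwa [one_smul] at h2
end

section
/- If M is a quasi-continuous right R-module, then its rational hull Ẽ(M) is a quasi-continuous right R-module. -/
/-- Let `E` be an injective hull of `M ≤ E` (then `E` is also
an injective hull of `Ẽ(M)`). If `M` is quasi-continuous, i.e. `f(M) ⊆ M` for
every idempotent `f ∈ End_R(E)`, then `Ẽ(M)` is quasi-continuous. -/
theorem stmt10 (R : Type*) [Ring R] (E : Type*) [AddCommGroup E] [Module R E]
    (M : Submodule R E) (hE : Module.Injective R E)
    (hess : ∀ N : Submodule R E, N ⊓ M = ⊥ → N = ⊥)
    (hqc : ∀ f : E →ₗ[R] E, f ∘ₗ f = f → ∀ m ∈ M, f m ∈ M) :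
    ∀ f : E →ₗ[R] E, f ∘ₗ f = f → ∀ x ∈ ratHull R E M, f x ∈ ratHull R E M := by
  intro f hf x hx ϑ h
  exact hx (ϑ ∘ₗ f) (fun m hm => h (f m) (hqc f hf m hm))
end

section
/- If M is a quasi-injective right R-module, then its rational hull Ẽ(M) is a quasi-injective right R-module. -/
/-- Let `E` be an injective hull of `M ≤ E` (then `E` is also
an injective hull of `Ẽ(M)`). If `M` is quasi-injective, i.e. `ϑ(M) ⊆ M` for
every `ϑ ∈ End_R(E)`, then `Ẽ(M)` is quasi-injective. -/
theorem stmt11 (R : Type*) [Ring R] (E : Type*) [AddCommGroup E] [Module R E]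
    (M : Submodule R E) (hE : Module.Injective R E)
    (hess : ∀ N : Submodule R E, N ⊓ M = ⊥ → N = ⊥)
    (hqi : ∀ ϑ : E →ₗ[R] E, ∀ m ∈ M, ϑ m ∈ M) :
    ∀ ϑ : E →ₗ[R] E, ∀ x ∈ ratHull R E M, ϑ x ∈ ratHull R E M := by
  intro ϑ x hx ψ hψ
  exact hx (ψ.comp ϑ) (fun m hm => hψ _ (hqi ϑ m hm))
end

section
/- Let M = ⊕_{k∈Λ} M_k be a direct sum of right R-modules M_k. If either R is right noetherian or Λ is a finite index set, then Ẽ(M) ⊆ ⊕_{k∈Λ} Ẽ(M_k), where both sides are computed inside E(M) = ⊕_{k∈Λ} E(M_k). -/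
/- Right `R`-modules are rendered as left `R`-modules (i.e. we work over the
opposite ring), so "`x·r`" becomes "`r • x`" and "right noetherian" becomes
`IsNoetherianRing R`. -/

universe u

/-- For each `k` let `E k` be an injective hull of
`M k ≤ E k`, and suppose `R` is noetherian or `Λ` is finite (so that
`⨁ k, E k` is an injective hull of `⨁ k, M k`). Then the rational hull of
`⨁ k, M k`, computed inside `⨁ k, E k`, is contained in `⨁ k, Ẽ(M k)`. -/
theorem stmt12 (R : Type u) [Ring R] (Λ : Type u) [DecidableEq Λ]
    (E : Λ → Type u) [∀ k, AddCommGroup (E k)] [∀ k, Module R (E k)]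
    (M : ∀ k, Submodule R (E k))
    (hinj : ∀ k, Module.Injective R (E k))
    (hess : ∀ k, ∀ N : Submodule R (E k), N ⊓ M k = ⊥ → N = ⊥)
    (hyp : IsNoetherianRing R ∨ Finite Λ) :
    ratHull R (DirectSum Λ E) (⨆ k, Submodule.map (DirectSum.lof R Λ E k) (M k)) ≤
      ⨆ k, Submodule.map (DirectSum.lof R Λ E k) (ratHull R (E k) (M k)) := by
  classical
  intro x hx
  have key : ∀ k, x k ∈ ratHull R (E k) (M k) := by
    intro k θ hθ
    have h := hx ((DirectSum.lof R Λ E k).comp (θ.comp (DirectSum.component R Λ E k))) (by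
      intro m hm
      have hle : (⨆ k, Submodule.map (DirectSum.lof R Λ E k) (M k)) ≤
          LinearMap.ker ((DirectSum.lof R Λ E k).comp
            (θ.comp (DirectSum.component R Λ E k))) := by
        refine iSup_le fun j => ?_
        rintro _ ⟨y, hy, rfl⟩
        rw [LinearMap.mem_ker, LinearMap.comp_apply, LinearMap.comp_apply]
        by_cases hjk : j = k
        · subst hjk
          rw [DirectSum.component.lof_self, hθ y hy, map_zero]
        · rw [DirectSum.component.of, dif_neg hjk, map_zero, map_zero]
      exact hle hm)
    have h2 := congrArg (DirectSum.component R Λ E k) h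
    rw [LinearMap.comp_apply, LinearMap.comp_apply, DirectSum.component.lof_self, map_zero] at h2
    exact h2
  rw [← DirectSum.sum_support_of x]
  refine Submodule.sum_mem _ fun k _ => ?_
  exact Submodule.mem_iSup_of_mem k ⟨x k, key k, rfl⟩
end

section
/- Let N ≤ M be right R-modules and let {K_i}_{i∈Λ} be a family of right R-modules. Then the following are equivalent: N is K_i-dense in M for every i ∈ Λ; N is (⊕_{i∈Λ} K_i)-dense in M; N is (⊕_{i∈Λ} Ẽ(K_i))-dense in M. -/
/- Right `R`-modules are rendered as left `R`-modules (i.e. we work over the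
opposite ring), so "`x·r`" becomes "`r • x`". -/

/-- `N ≤ M` is `K`-dense in `M`. -/
def IsRelDense (R : Type*) [Ring R] (K : Type*) [AddCommGroup K] [Module R K]
    {M : Type*} [AddCommGroup M] [Module R M] (N : Submodule R M) : Prop :=
  ∀ (m : M) (x : K), x ≠ 0 → ∃ r : R, r • m ∈ N ∧ r • x ≠ 0

theorem relDense_directSum {R : Type*} [Ring R] {Λ : Type*}
    {M : Type*} [AddCommGroup M] [Module R M] (N : Submodule R M)
    (A : Λ → Type*) [∀ i, AddCommGroup (A i)] [∀ i, Module R (A i)] :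
    (∀ i, IsRelDense R (A i) N) ↔ IsRelDense R (DirectSum Λ A) N := by
  classical
  constructor
  · intro h m x hx
    obtain ⟨i, hi⟩ : ∃ i, x i ≠ 0 := by
      by_contra! hc
      exact hx (DFinsupp.ext hc)
    obtain ⟨r, h1, h2⟩ := h i m (x i) hi
    refine ⟨r, h1, fun h0 => h2 ?_⟩
    rw [← DirectSum.smul_apply, h0, DirectSum.zero_apply]
  · intro h i m x hx
    obtain ⟨r, h1, h2⟩ := h m (DirectSum.lof R Λ A i x) (fun h0 => hx (by
      have := congrArg (fun f => f i) h0
      simpa [DirectSum.lof_apply] using this))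
    refine ⟨r, h1, fun h0 => h2 ?_⟩
    rw [← map_smul, h0, map_zero]

theorem relDense_ratHull {R : Type*} [Ring R]
    {M : Type*} [AddCommGroup M] [Module R M] (N : Submodule R M)
    {E : Type*} [AddCommGroup E] [Module R E] (K : Submodule R E)
    (hess : ∀ P : Submodule R E, P ⊓ K = ⊥ → P = ⊥) :
    IsRelDense R K N ↔ IsRelDense R (ratHull R E K) N := by
  constructor
  · rintro h m ⟨x, hx⟩ hx0
    have hx0' : x ≠ 0 := fun h0 => hx0 (Subtype.ext h0)
    have h1 : Submodule.span R {x} ⊓ K ≠ ⊥ := fun hb =>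
      hx0' (Submodule.span_singleton_eq_bot.1 (hess _ hb))
    obtain ⟨y, ⟨hy1, hy2⟩, hy0⟩ := Submodule.exists_mem_ne_zero_of_ne_bot h1
    obtain ⟨s, rfl⟩ := Submodule.mem_span_singleton.1 hy1
    obtain ⟨r, h2, h3⟩ := h (s • m) ⟨s • x, hy2⟩ (fun h0 => hy0 (congrArg Subtype.val h0))
    refine ⟨r * s, by rwa [mul_smul], fun h0 => h3 (Subtype.ext ?_)⟩
    have := congrArg Subtype.val h0
    simpa [mul_smul] using this
  · rintro h m ⟨x, hx⟩ hx0
    obtain ⟨r, h1, h2⟩ := h m ⟨x, fun ϑ hϑ => hϑ x hx⟩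
      (fun h0 => hx0 (by
        have h3 : x = 0 := congrArg Subtype.val h0
        exact Subtype.ext h3))
    refine ⟨r, h1, fun h0 => h2 ?_⟩
    have h3 : r • x = 0 := congrArg Subtype.val h0
    exact Subtype.ext h3

/-- Let `N ≤ M` and let `K i ≤ EK i` be a family of modules
with injective hulls `EK i`. TFAE: `N` is `K i`-dense in `M` for all `i`;
`N` is `⨁ i, K i`-dense in `M`; `N` is `⨁ i, Ẽ(K i)`-dense in `M`. -/
theorem stmt13 (R : Type*) [Ring R] (Λ : Type*)
    (M : Type*) [AddCommGroup M] [Module R M] (N : Submodule R M)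
    (EK : Λ → Type*) [∀ i, AddCommGroup (EK i)] [∀ i, Module R (EK i)]
    (K : ∀ i, Submodule R (EK i))
    (hinj : ∀ i, Module.Injective R (EK i))
    (hess : ∀ i, ∀ P : Submodule R (EK i), P ⊓ K i = ⊥ → P = ⊥) :
    ((∀ i, IsRelDense R ↥(K i) N) ↔
      IsRelDense R (DirectSum Λ (fun i => ↥(K i))) N) ∧
    ((∀ i, IsRelDense R ↥(K i) N) ↔
      IsRelDense R (DirectSum Λ (fun i => ↥(ratHull R (EK i) (K i)))) N) := by
  refine ⟨relDense_directSum N _, ?_⟩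
  rw [← relDense_directSum]
  exact forall_congr' fun i => relDense_ratHull N (K i) (hess i)
end

section
/- Let Λ be any index set and for each i ∈ Λ let N_i ≤ M_i be right R-modules. Set N = ⊕_{k∈Λ} N_k and M = ⊕_{k∈Λ} M_k. Then N is a dense submodule of M if and only if N_i is M_j-dense in M_i for all i, j ∈ Λ. -/
theorem mem_iSup_lof_aux (R : Type*) [Ring R] (Λ : Type*) [DecidableEq Λ]
    (M : Λ → Type*) [∀ i, AddCommGroup (M i)] [∀ i, Module R (M i)]
    (N : ∀ i, Submodule R (M i)) (z : DirectSum Λ M) :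
    z ∈ (⨆ k, Submodule.map (DirectSum.lof R Λ M k) (N k) :
        Submodule R (DirectSum Λ M)) ↔ ∀ i, z i ∈ N i := by
  classical
  constructor
  · intro hz i
    have h : (⨆ k, Submodule.map (DirectSum.lof R Λ M k) (N k) :
        Submodule R (DirectSum Λ M)) ≤ (N i).comap (DirectSum.component R Λ M i) := by
      refine iSup_le fun k => ?_
      rintro _ ⟨n, hn, rfl⟩
      rw [Submodule.mem_comap]
      by_cases hk : k = i
      · subst hk
        rw [DirectSum.component.lof_self]
        exact hn
      · rw [DirectSum.component.of, dif_neg hk]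
        exact zero_mem _
    exact h hz
  · intro h
    rw [← DirectSum.sum_support_of z]
    refine Submodule.sum_mem _ fun i _ => ?_
    exact Submodule.mem_iSup_of_mem i ⟨z i, h i, rfl⟩

/-- For submodules `N i ≤ M i`, the direct sum `⨁ i, N i` is
dense in `⨁ i, M i` iff `N i` is `M j`-dense in `M i` for all `i, j`. -/
theorem stmt14 (R : Type*) [Ring R] (Λ : Type*) [DecidableEq Λ]
    (M : Λ → Type*) [∀ i, AddCommGroup (M i)] [∀ i, Module R (M i)]
    (N : ∀ i, Submodule R (M i)) :
    IsDenseSub R (⨆ k, Submodule.map (DirectSum.lof R Λ M k) (N k) :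
        Submodule R (DirectSum Λ M)) ↔
      ∀ i j, IsRelDense R (M j) (N i) := by
  classical
  constructor
  · intro h i j m x hx
    obtain ⟨r, h1, h2⟩ := h (DirectSum.lof R Λ M i m) (DirectSum.lof R Λ M j x) (by
      intro h0
      apply hx
      have := congrArg (DirectSum.component R Λ M j) h0
      rwa [DirectSum.component.lof_self, map_zero] at this)
    refine ⟨r, ?_, ?_⟩
    · rw [← map_smul, mem_iSup_lof_aux] at h1
      have := h1 i
      rwa [DirectSum.lof_apply] at this
    · intro h0
      apply h2
      rw [← map_smul, h0, map_zero]
  · intro h x y hy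
    obtain ⟨j, hj⟩ : ∃ j, y j ≠ 0 := by
      by_contra! hc
      exact hy (DFinsupp.ext hc)
    have key : ∀ s : Finset Λ, ∃ r : R, (∀ i ∈ s, r • x i ∈ N i) ∧ r • y j ≠ 0 := by
      intro s
      induction s using Finset.induction_on with
      | empty => exact ⟨1, by simp, by simpa using hj⟩
      | insert a s ha ih =>
        obtain ⟨r, h1, h2⟩ := ih
        obtain ⟨t, h3, h4⟩ := h a j (r • x a) (r • y j) h2
        refine ⟨t * r, ?_, by rwa [mul_smul]⟩
        intro i hi
        rw [mul_smul]
        rcases Finset.mem_insert.mp hi with rfl | hi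
        · exact h3
        · exact (N i).smul_mem t (h1 i hi)
    obtain ⟨r, h1, h2⟩ := key (DFinsupp.support x)
    refine ⟨r, ?_, ?_⟩
    · rw [mem_iSup_lof_aux]
      intro i
      rw [DirectSum.smul_apply]
      by_cases hi : i ∈ DFinsupp.support x
      · exact h1 i hi
      · have : x i = 0 := DFinsupp.notMem_support_iff.mp hi
        rw [this, smul_zero]
        exact zero_mem _
    · intro h0
      apply h2
      rw [← DirectSum.smul_apply, h0]
      rfl
end

section
/- Let M = ⊕_{k∈Λ} M_k be a direct sum of right R-modules, and suppose either R is right noetherian or Λ is a finite index set. Then Ẽ(M) = ⊕_{k∈Λ} Ẽ(M_k) (inside E(M) = ⊕_{k∈Λ} E(M_k)) if and only if M_i is M_j-dense in Ẽ(M_i) for all i, j ∈ Λ. -/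
/- Right `R`-modules are rendered as left `R`-modules (i.e. we work over the
opposite ring), so "`x·r`" becomes "`r • x`" and "right noetherian" becomes
`IsNoetherianRing R`. -/

universe u

theorem aux_dense_iff (R : Type u) [Ring R] (A B : Type u) [AddCommGroup A] [Module R A]
    [AddCommGroup B] [Module R B] (M H : Submodule R A) (N : Submodule R B)
    (hinj : Module.Injective R B)
    (hess : ∀ K : Submodule R B, K ⊓ N = ⊥ → K = ⊥) :
    IsRelDense R N (Submodule.comap H.subtype M) ↔
      ∀ f : A →ₗ[R] B, (∀ m ∈ M, f m = 0) → ∀ x ∈ H, f x = 0 := by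
  constructor
  · intro hd f hf x hx
    by_contra hne
    have h1 : R ∙ (f x) ⊓ N ≠ ⊥ := by
      intro h
      exact hne (by simpa using hess _ h)
    obtain ⟨y, hy, hy0⟩ := Submodule.exists_mem_ne_zero_of_ne_bot h1
    obtain ⟨hy1, hy2⟩ := Submodule.mem_inf.1 hy
    obtain ⟨s, rfl⟩ := Submodule.mem_span_singleton.1 hy1
    obtain ⟨r, hr1, hr2⟩ := hd ⟨s • x, H.smul_mem s hx⟩ ⟨s • f x, hy2⟩
      (by intro h; exact hy0 (congrArg Subtype.val h))
    apply hr2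
    apply Subtype.ext
    have h3 : r • s • x ∈ M := hr1
    have := hf _ h3
    simpa using this
  · intro h m x hx
    by_contra hcon
    push Not at hcon
    let p : R →ₗ[R] (A ⧸ M) := LinearMap.toSpanSingleton R (A ⧸ M) (M.mkQ (m : A))
    let q : R →ₗ[R] B := LinearMap.toSpanSingleton R B (x : B)
    have hpq : LinearMap.ker p ≤ LinearMap.ker q := by
      intro r hr
      have hr' : M.mkQ (r • (m : A)) = 0 := by
        rw [map_smul]; exact hr
      have hr2 : r • (m : A) ∈ M := (Submodule.Quotient.mk_eq_zero M).1 hr'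
      have := hcon r hr2
      exact congrArg Subtype.val this
    obtain ⟨g, hg⟩ := hinj.out ((LinearMap.ker p).liftQ p le_rfl)
      (LinearMap.ker_eq_bot.1 (Submodule.ker_liftQ_eq_bot _ _ _ le_rfl))
      ((LinearMap.ker p).liftQ q hpq)
    have h1 := hg (Submodule.Quotient.mk 1)
    have h2 := h (g ∘ₗ M.mkQ) (by
      intro a ha
      have : M.mkQ a = 0 := by simpa using ha
      rw [LinearMap.comp_apply, this, map_zero]) m m.2
    rw [Submodule.liftQ_apply, Submodule.liftQ_apply] at h1
    simp only [p, q, LinearMap.toSpanSingleton_apply, one_smul] at h1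
    rw [LinearMap.comp_apply, h1] at h2
    exact hx (Subtype.ext h2)

theorem aux_mem_sup (R : Type u) [Ring R] (Λ : Type u) [DecidableEq Λ]
    (E : Λ → Type u) [∀ k, AddCommGroup (E k)] [∀ k, Module R (E k)]
    (M : ∀ k, Submodule R (E k)) (x : DirectSum Λ E) :
    x ∈ (⨆ k, Submodule.map (DirectSum.lof R Λ E k) (M k)) ↔ ∀ k, x k ∈ M k := by
  constructor
  · intro hx k
    have : (⨆ k, Submodule.map (DirectSum.lof R Λ E k) (M k)) ≤
        (M k).comap (DirectSum.component R Λ E k) := by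
      apply iSup_le
      rintro i y ⟨z, hz, rfl⟩
      rw [Submodule.mem_comap, DirectSum.component.of]
      split_ifs with h
      · subst h; exact hz
      · exact zero_mem _
    exact this hx
  · intro hx
    classical
    rw [← DirectSum.sum_support_of x]
    exact sum_mem fun i _ => Submodule.mem_iSup_of_mem i ⟨x i, hx i, rfl⟩

theorem aux_mem_hull (R : Type u) [Ring R] (Λ : Type u) [DecidableEq Λ]
    (E : Λ → Type u) [∀ k, AddCommGroup (E k)] [∀ k, Module R (E k)]
    (M : ∀ k, Submodule R (E k)) (x : DirectSum Λ E) :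
    x ∈ ratHull R (DirectSum Λ E) (⨆ k, Submodule.map (DirectSum.lof R Λ E k) (M k)) ↔
      ∀ i j, ∀ f : E i →ₗ[R] E j, (∀ m ∈ M i, f m = 0) → f (x i) = 0 := by
  constructor
  · intro hx i j f hf
    have := hx (DirectSum.lof R Λ E j ∘ₗ f ∘ₗ DirectSum.component R Λ E i) (by
      intro m hm
      have h1 := (aux_mem_sup R Λ E M m).1 hm i
      have h2 := hf _ h1
      change DirectSum.lof R Λ E j (f (m i)) = 0
      rw [h2, map_zero])
    have h3 : DirectSum.lof R Λ E j (f (x i)) = 0 := this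
    have h4 := congrArg (DirectSum.component R Λ E j) h3
    rwa [DirectSum.component.lof_self, map_zero] at h4
  · intro hx ϑ hϑ
    classical
    rw [← DirectSum.sum_support_of x, map_sum]
    refine Finset.sum_eq_zero fun i _ => ?_
    refine DFinsupp.ext fun j => ?_
    exact hx i j (DirectSum.component R Λ E j ∘ₗ ϑ ∘ₗ DirectSum.lof R Λ E i) (by
      intro m hm
      rw [LinearMap.comp_apply, LinearMap.comp_apply,
        hϑ _ (Submodule.mem_iSup_of_mem i ⟨m, hm, rfl⟩), map_zero])

/-- For each `k` let `E k` be an injective hull of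
`M k ≤ E k`, and suppose `R` is noetherian or `Λ` is finite (so that
`⨁ k, E k` is an injective hull of `⨁ k, M k`). Then
`Ẽ(⨁ k, M k) = ⨁ k, Ẽ(M k)` (inside `⨁ k, E k`) iff `M i` is `M j`-dense in
`Ẽ(M i)` for all `i, j`. -/
theorem stmt15 (R : Type u) [Ring R] (Λ : Type u) [DecidableEq Λ]
    (E : Λ → Type u) [∀ k, AddCommGroup (E k)] [∀ k, Module R (E k)]
    (M : ∀ k, Submodule R (E k))
    (hinj : ∀ k, Module.Injective R (E k))
    (hess : ∀ k, ∀ N : Submodule R (E k), N ⊓ M k = ⊥ → N = ⊥)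
    (hyp : IsNoetherianRing R ∨ Finite Λ) :
    (ratHull R (DirectSum Λ E) (⨆ k, Submodule.map (DirectSum.lof R Λ E k) (M k)) =
        ⨆ k, Submodule.map (DirectSum.lof R Λ E k) (ratHull R (E k) (M k))) ↔
      ∀ i j, IsRelDense R ↥(M j)
        (Submodule.comap (ratHull R (E i) (M i)).subtype (M i)) := by
  have key : ∀ i j, IsRelDense R ↥(M j)
        (Submodule.comap (ratHull R (E i) (M i)).subtype (M i)) ↔ _ := fun i j =>
    aux_dense_iff R (E i) (E j) (M i) (ratHull R (E i) (M i)) (M j) (hinj j) (hess j)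
  simp only [key]
  constructor
  · intro h i j f hf x hx
    have h1 : DirectSum.lof R Λ E i x ∈
        ratHull R (DirectSum Λ E) (⨆ k, Submodule.map (DirectSum.lof R Λ E k) (M k)) := by
      rw [h]
      exact Submodule.mem_iSup_of_mem i ⟨x, hx, rfl⟩
    have h2 := (aux_mem_hull R Λ E M _).1 h1 i j f hf
    rwa [DirectSum.lof_apply] at h2
  · intro h
    ext x
    rw [aux_mem_hull, aux_mem_sup]
    constructor
    · intro hx k f hf
      exact hx k k f hf
    · intro hx i j f hf
      exact h i j f hf _ (hx i)
end

section
/- Let {M_k}_{k∈Λ} be a family of rationally complete right R-modules. If either R is right noetherian or Λ is a finite index set, then M = ⊕_{k∈Λ} M_k is rationally complete. -/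
/- Right `R`-modules are rendered as left `R`-modules (i.e. we work over the
opposite ring), so "`x·r`" becomes "`r • x`" and "right noetherian" becomes
`IsNoetherianRing R`. -/

universe u

theorem exists_retract (R : Type u) [Ring R] {N V A : Type u} [AddCommGroup N] [Module R N]
    [AddCommGroup V] [Module R V] [AddCommGroup A] [Module R A]
    (f : N →ₗ[R] V) (hf : Function.Injective f) (hd : IsDenseSub R (LinearMap.range f))
    (π : N →ₗ[R] A) (ι : A →ₗ[R] N) (hπ : ∀ z, π (ι z) = z)
    (hA : RationallyComplete R A) :
    ∃ p : V →ₗ[R] A, ∀ m, p (f m) = π m := by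
  have hι : ∀ z, z ≠ 0 → f (ι z) ≠ 0 := by
    intro z hz h
    apply hz
    rw [← hπ z, hf (h.trans (map_zero f).symm), map_zero]
  let T : Submodule R V :=
    { carrier := {v | ∀ (a : R) (z : A), z ≠ 0 →
        ∃ (r : R) (m : N), r • a • v = f m ∧ π m = 0 ∧ r • z ≠ 0}
      zero_mem' := fun a z hz => ⟨1, 0, by simp, by simp, by simpa using hz⟩
      add_mem' := by
        intro v w hv hw a z hz
        obtain ⟨r, m, h1, h2, h3⟩ := hv a z hz
        obtain ⟨s, n, h4, h5, h6⟩ := hw (r * a) (r • z) h3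
        refine ⟨s * r, s • m + n, ?_, ?_, ?_⟩
        · rw [map_add, map_smul, ← h1, ← h4]
          simp only [smul_add, mul_smul]
        · rw [map_add, map_smul, h2, h5]; simp
        · rwa [mul_smul]
      smul_mem' := by
        intro b v hv a z hz
        obtain ⟨r, m, h1, h2, h3⟩ := hv (a * b) z hz
        exact ⟨r, m, by rw [← h1, mul_smul a b], h2, h3⟩ }
  have hT : ∀ v, v ∈ T ↔ ∀ (a : R) (z : A), z ≠ 0 →
        ∃ (r : R) (m : N), r • a • v = f m ∧ π m = 0 ∧ r • z ≠ 0 := fun v => Iff.rfl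
  have hker : ∀ m, π m = 0 → f m ∈ T := by
    intro m hm
    rw [hT]
    intro a z hz
    exact ⟨1, a • m, by simp, by simp [hm], by simpa using hz⟩
  have hTf : ∀ m, f m ∈ T → π m = 0 := by
    intro m hm
    by_contra hne
    obtain ⟨r, n, h1, h2, h3⟩ := (hT _).1 hm 1 _ hne
    apply h3
    rw [one_smul, ← map_smul] at h1
    rw [← map_smul, hf h1, h2]
  let g : A →ₗ[R] V ⧸ T := T.mkQ ∘ₗ f ∘ₗ ι
  have hg : ∀ m, g (π m) = T.mkQ (f m) := by
    intro m
    change T.mkQ (f (ι (π m))) = _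
    rw [← sub_eq_zero, ← map_sub, ← map_sub, Submodule.mkQ_apply, Submodule.Quotient.mk_eq_zero]
    apply hker
    rw [map_sub, hπ, sub_self]
  have hginj : Function.Injective g := by
    rw [injective_iff_map_eq_zero]
    intro z hz
    have : f (ι z) ∈ T := (Submodule.Quotient.mk_eq_zero T).1 hz
    rw [← hπ z, hTf _ this]
  have hgd : IsDenseSub R (LinearMap.range g) := by
    intro x y hy
    obtain ⟨x, rfl⟩ := T.mkQ_surjective x
    obtain ⟨y, rfl⟩ := T.mkQ_surjective y
    have hy' : y ∉ T := fun h => hy ((Submodule.Quotient.mk_eq_zero T).2 h)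
    rw [hT] at hy'
    push Not at hy'
    obtain ⟨a, z, hz, h⟩ := hy'
    obtain ⟨r, ⟨m, hm⟩, hr⟩ := hd (a • y) _ (hι z hz)
    have hπm : π m ≠ 0 := by
      intro h0
      apply hr
      rw [← map_smul, ← map_smul, h r m hm.symm h0, map_zero, map_zero]
    obtain ⟨s, ⟨n, hn⟩, hs⟩ := hd (r • a • x) _ (hι _ hπm)
    refine ⟨s * r * a, ⟨π n, ?_⟩, ?_⟩
    · rw [hg, hn, ← map_smul]; simp only [mul_smul]
    · intro h0
      rw [← map_smul, Submodule.mkQ_apply, Submodule.Quotient.mk_eq_zero, mul_smul, mul_smul, ← hm,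
        ← map_smul] at h0
      have := hTf _ h0
      apply hs
      rw [← map_smul, ← map_smul, ← map_smul, this, map_zero, map_zero]
  have hgs := hA (V ⧸ T) g hginj hgd
  let e := LinearEquiv.ofBijective g ⟨hginj, hgs⟩
  refine ⟨e.symm.toLinearMap ∘ₗ T.mkQ, fun m => ?_⟩
  change e.symm (T.mkQ (f m)) = π m
  rw [LinearEquiv.symm_apply_eq]
  exact (hg m).symm

/-- If each `M k` is rationally complete and `R` is
noetherian or `Λ` is finite, then `⨁ k, M k` is rationally complete. -/
theorem stmt16 (R : Type u) [Ring R] (Λ : Type u)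
    (M : Λ → Type u) [∀ k, AddCommGroup (M k)] [∀ k, Module R (M k)]
    (hrc : ∀ k, RationallyComplete R (M k))
    (hyp : IsNoetherianRing R ∨ Finite Λ) :
    RationallyComplete R (DirectSum Λ M) := by
  classical
  intro V _ _ f hf hd
  have H : ∀ k, ∃ p : V →ₗ[R] M k, ∀ m, p (f m) = DirectSum.component R Λ M k m := fun k =>
    exists_retract R f hf hd (DirectSum.component R Λ M k) (DirectSum.lof R Λ M k)
      (fun z => DirectSum.component.lof_self R k z) (hrc k)
  choose p hp using H
  have hinj : ∀ y : V, (∀ k, p k y = 0) → y = 0 := by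
    intro y hy
    by_contra hne
    obtain ⟨r, ⟨m, hm⟩, hr⟩ := hd y y hne
    apply hr
    rw [← hm]
    have : m = 0 := by
      apply DirectSum.ext_component R
      intro k
      rw [← hp, hm, map_smul, hy, smul_zero, map_zero]
    rw [this, map_zero]
  have hfin : ∀ x : V, ∃ F : Finset Λ, ∀ k, k ∉ F → p k x = 0 := by
    intro x
    rcases hyp with hN | hF
    · let I : Ideal R := (LinearMap.range f).comap (LinearMap.toSpanSingleton R V x)
      obtain ⟨S, hS⟩ := (IsNoetherian.noetherian I : I.FG)
      have hG : ∀ r : R, ∃ F : Finset Λ, r ∈ I → ∀ k, k ∉ F → r • p k x = 0 := by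
        intro r
        by_cases hr : r ∈ I
        · obtain ⟨m, hm⟩ := hr
          refine ⟨DFinsupp.support m, fun _ k hk => ?_⟩
          rw [DFinsupp.notMem_support_iff] at hk
          have hm' : f m = r • x := by simpa using hm
          rw [← map_smul, ← hm', hp]
          exact hk
        · exact ⟨∅, fun h => absurd h hr⟩
      choose G hG using hG
      refine ⟨S.biUnion G, fun k hk => ?_⟩
      by_contra hne
      have hIle : I ≤ LinearMap.ker (LinearMap.toSpanSingleton R (M k) (p k x)) := by
        rw [← hS, Submodule.span_le]
        intro r hr
        have hrI : r ∈ I := by rw [← hS]; exact Submodule.subset_span hr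
        have := hG r hrI k (fun h => hk (Finset.mem_biUnion.2 ⟨r, hr, h⟩))
        simpa using this
      have hne' : f (DirectSum.lof R Λ M k (p k x)) ≠ 0 := by
        intro h0
        apply hne
        have := hp k (DirectSum.lof R Λ M k (p k x))
        rw [h0, map_zero, DirectSum.component.lof_self] at this
        exact this.symm
      obtain ⟨r, hr, hr'⟩ := hd x _ hne'
      apply hr'
      have hrI : r ∈ I := by simpa [I] using hr
      have : r • p k x = 0 := by simpa using hIle hrI
      rw [← map_smul, ← map_smul, this, map_zero, map_zero]
    · haveI := Fintype.ofFinite Λ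
      exact ⟨Finset.univ, fun k hk => absurd (Finset.mem_univ k) hk⟩
  intro x
  obtain ⟨F, hF⟩ := hfin x
  let m : DirectSum Λ M := DFinsupp.mk F (fun k => p k x)
  refine ⟨m, ?_⟩
  rw [← sub_eq_zero]
  apply hinj
  intro k
  rw [map_sub, hp, sub_eq_zero]
  change (DFinsupp.mk F (fun k => p k x)) k = p k x
  rw [DFinsupp.mk_apply]
  split_ifs with h
  · rfl
  · exact (hF k h).symm
end

section
/- Let H be a right ring of quotients of a ring R and let M be a right H-module (viewed also as a right R-module by restriction). If R is M-dense in H as right R-modules, then End_R(M) = End_H(M), i.e. every R-linear endomorphism of M is H-linear. -/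
/- Right modules and right rings of quotients are rendered on the left (i.e. we
work over the opposite rings): `H` is a left ring of quotients of its subring
`i(R)`, `M` is a left `H`-module, and "`R` is `M`-dense in `H`" reads: for all
`h ∈ H` and nonzero `m ∈ M` there is `r ∈ R` with `i(r)·h ∈ i(R)` and
`i(r) • m ≠ 0`. -/

/-- Let `H` be a ring of quotients of `R` (embedded via the
injective ring map `i`) and `M` an `H`-module. If `R` is `M`-dense in `H`,
then `End_R(M) = End_H(M)`: every additive endomorphism of `M` commuting with
the `R`-action commutes with the `H`-action. -/
theorem stmt17 (R H : Type*) [Ring R] [Ring H] (i : R →+* H)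
    (hi : Function.Injective i)
    (hq : ∀ x y : H, x ≠ 0 → ∃ r : R, i r * x ≠ 0 ∧ ∃ s : R, i r * y = i s)
    (M : Type*) [AddCommGroup M] [Module H M]
    (hdense : ∀ (h : H) (m : M), m ≠ 0 →
      ∃ r : R, (∃ s : R, i r * h = i s) ∧ i r • m ≠ 0) :
    ∀ φ : M →+ M, (∀ (r : R) (m : M), φ (i r • m) = i r • φ m) →
      ∀ (h : H) (m : M), φ (h • m) = h • φ m := by
  intro φ hφ h m
  by_contra hne
  obtain ⟨r, ⟨s, hs⟩, hr⟩ := hdense h (φ (h • m) - h • φ m) (sub_ne_zero.mpr hne)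
  apply hr
  rw [smul_sub, ← hφ, smul_smul, smul_smul, hs, hφ, sub_self]
end

section
/- Let M be a right R-module and let Ω : End_R(M) → End_R(Ẽ(M)) be the canonical ring embedding sending φ to its unique extension φ̃. If M is quasi-injective, then Ω is a ring isomorphism. Conversely, if M is polyform and Ω is a ring isomorphism, then M is quasi-injective. -/
/- Right `R`-modules are rendered as left `R`-modules (i.e. we work over the
opposite ring), so "`x·r`" becomes "`r • x`". -/

/-- `A` is a dense submodule of `B` (for submodules `A ≤ B` of an ambient
module `E`). -/
def DenseIn (R : Type*) [Ring R] {E : Type*} [AddCommGroup E] [Module R E]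
    (A B : Submodule R E) : Prop :=
  ∀ x ∈ B, ∀ y ∈ B, y ≠ (0 : E) → ∃ r : R, r • x ∈ A ∧ r • y ≠ 0

/-- `A` is an essential submodule of `B` (inside the ambient module `E`). -/
def EssentialIn (R : Type*) [Ring R] {E : Type*} [AddCommGroup E] [Module R E]
    (A B : Submodule R E) : Prop :=
  ∀ P : Submodule R E, P ≤ B → P ⊓ A = ⊥ → P = ⊥

/-- `B` is polyform: every essential submodule of `B` is dense in `B`. -/
def PolyformIn (R : Type*) [Ring R] {E : Type*} [AddCommGroup E] [Module R E]
    (B : Submodule R E) : Prop :=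
  ∀ A : Submodule R E, A ≤ B → EssentialIn R A B → DenseIn R A B

/-- Let `E` be an injective hull of `M ≤ E`, and let
`Ω : End_R(M) →+* End_R(Ẽ(M))` be the canonical embedding (sending `φ` to its
unique extension). If `M` is quasi-injective (`ϑ(M) ⊆ M` for all
`ϑ ∈ End_R(E)`), then `Ω` is a ring isomorphism. Conversely, if `M` is
polyform and `Ω` is a ring isomorphism, then `M` is quasi-injective. -/
theorem stmt19 (R : Type*) [Ring R] (E : Type*) [AddCommGroup E] [Module R E]
    (M : Submodule R E) (hE : Module.Injective R E)
    (hess : ∀ N : Submodule R E, N ⊓ M = ⊥ → N = ⊥)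
    (Ω : Module.End R ↥M →+* Module.End R ↥(ratHull R E M))
    (hΩ : ∀ (φ : Module.End R ↥M) (x : ↥(ratHull R E M)) (m : ↥M),
      (x : E) = (m : E) → ((Ω φ) x : E) = ((φ m : ↥M) : E)) :
    ((∀ ϑ : E →ₗ[R] E, ∀ m ∈ M, ϑ m ∈ M) → Function.Bijective Ω) ∧
    (PolyformIn R M → Function.Bijective Ω →
      ∀ ϑ : E →ₗ[R] E, ∀ m ∈ M, ϑ m ∈ M) := by
  classical
  have ext : ∀ (A : Submodule R E) (f : A →ₗ[R] E), ∃ g : E →ₗ[R] E, ∀ a : A, g a = f a :=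
    fun A f => hE.out A.subtype A.injective_subtype f
  have hMH : M ≤ ratHull R E M := fun m hm ϑ h => h m hm
  constructor
  · intro hq
    constructor
    · intro φ ψ h
      ext m
      rw [← hΩ φ ⟨m, hMH m.2⟩ m rfl, ← hΩ ψ ⟨m, hMH m.2⟩ m rfl, h]
    · intro ψ
      obtain ⟨ϑ, hϑ⟩ := ext _ ((ratHull R E M).subtype ∘ₗ ψ)
      refine ⟨ϑ.restrict (hq ϑ), ?_⟩
      obtain ⟨δ, hδ⟩ := ext _ ((ratHull R E M).subtype ∘ₗ (Ω (ϑ.restrict (hq ϑ)) - ψ))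
      ext x
      have h0 : δ x = 0 := by
        refine x.2 δ fun m hm => ?_
        have h1 := hδ ⟨m, hMH hm⟩
        have h2 := hΩ (ϑ.restrict (hq ϑ)) ⟨m, hMH hm⟩ ⟨m, hm⟩ rfl
        have h3 := hϑ ⟨m, hMH hm⟩
        simp only [LinearMap.comp_apply, LinearMap.sub_apply, map_sub, Submodule.subtype_apply,
          LinearMap.restrict_coe_apply] at h1 h2 h3
        rw [h1, h2, h3, sub_self]
      have h1 := hδ x
      rw [h0] at h1
      simp only [LinearMap.comp_apply, LinearMap.sub_apply, map_sub,
        Submodule.subtype_apply] at h1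
      exact sub_eq_zero.mp h1.symm
  · intro hpoly hbij ϑ
    have key : ∀ η : E →ₗ[R] E, (∀ m ∈ M, η m = 0) → ∀ m ∈ M, η (ϑ m) = 0 := by
      intro η hη m hm
      have hd : DenseIn R (M ⊓ M.comap ϑ) M := by
        refine hpoly _ inf_le_left fun P hP hPK => ?_
        have hz : ∀ p ∈ P, ϑ p ∈ M → p = 0 := fun p hp h => by
          have : p ∈ P ⊓ (M ⊓ M.comap ϑ) := ⟨hp, hP hp, h⟩
          rw [hPK] at this
          exact (Submodule.mem_bot R).mp this
        have hb : P.map ϑ = ⊥ := by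
          refine hess _ ((Submodule.eq_bot_iff _).mpr ?_)
          rintro _ ⟨⟨p, hp, rfl⟩, h⟩
          rw [hz p hp h, map_zero]
        refine (Submodule.eq_bot_iff _).mpr fun p hp => hz p hp ?_
        have : ϑ p ∈ P.map ϑ := Submodule.mem_map_of_mem hp
        rw [hb, Submodule.mem_bot] at this
        rw [this]
        exact M.zero_mem
      by_contra hne
      apply hne
      have hs : R ∙ (η (ϑ m)) = ⊥ := by
        refine hess _ ((Submodule.eq_bot_iff _).mpr ?_)
        rintro y ⟨hy, hyM⟩
        obtain ⟨r, rfl⟩ := Submodule.mem_span_singleton.mp hy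
        by_contra hy0
        obtain ⟨s, hs1, hs2⟩ := hd (r • m) (M.smul_mem r hm) _ hyM hy0
        apply hs2
        have := hη _ hs1.2
        simpa only [map_smul] using this
      exact Submodule.span_singleton_eq_bot.mp hs
    have hH : ∀ x ∈ ratHull R E M, ϑ x ∈ ratHull R E M := fun x hx η hη =>
      hx (η ∘ₗ ϑ) (key η hη)
    obtain ⟨φ, hφ⟩ := hbij.2 (ϑ.restrict hH)
    intro m hm
    have h := hΩ φ ⟨m, hMH hm⟩ ⟨m, hm⟩ rfl
    rw [hφ, LinearMap.restrict_coe_apply] at h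
    change ϑ m = _ at h
    rw [h]
    exact (φ ⟨m, hm⟩).2
end
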